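/- arXiv:1711.08306 — 2 statements merged into one kernel-verified Lean document; each statement's English description precedes it below -/
import Mathlib

section
/- The quantities T_{1s}, s = 1, ..., p-1, are the unique solution of the linear system Σ_{s=1}^{p-1} (K(us) + p + 1)·t_s = K^{(m)}(u) + q + 1, u ranging over F_p^*. -/
/-- The Kloosterman sum over the prime field `F_p`. -/
noncomputable def kloosterman (p : ℕ) [Fact p.Prime] (u : ZMod p) : ℂ :=
  ∑ x ∈ (Finset.univ \ {0} : Finset (ZMod p)),
    Complex.exp (2 * Real.pi * Complex.I * ((x + u * x⁻¹).val : ℂ) / p)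

/-- The Kloosterman sum over the extension field `F = F_q`, `q = p^m`, at `u ∈ F_p`. -/
noncomputable def kloostermanExt (p : ℕ) [Fact p.Prime] (F : Type*) [Field F] [Fintype F]
    [DecidableEq F] [Algebra (ZMod p) F] (u : ZMod p) : ℂ :=
  ∑ x ∈ (Finset.univ \ {0} : Finset F),
    Complex.exp (2 * Real.pi * Complex.I *
      ((Algebra.trace (ZMod p) F (x + algebraMap (ZMod p) F u * x⁻¹)).val : ℂ) / p)

open Finset

/-- The number of nonzero `x ∈ F` with `tr x = i` and `tr x⁻¹ = j`. -/
noncomputable def traceInvCount (p : ℕ) (F : Type*) [Field F] [Algebra (ZMod p) F]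
    (i j : ZMod p) : ℕ :=
  Nat.card {x : F | x ≠ 0 ∧ Algebra.trace (ZMod p) F x = i ∧ Algebra.trace (ZMod p) F x⁻¹ = j}

section Characters

variable {p : ℕ} [Fact p.Prime]

theorem kloosterman_eq_sum_stdAddChar (u : ZMod p) :
    kloosterman p u = ∑ x ∈ univ \ {0}, ZMod.stdAddChar (x + u * x⁻¹) := by
  simp only [kloosterman, ZMod.stdAddChar_apply, ZMod.toCircle_apply]

theorem card_zmod_nonzero : (#(univ \ {0} : Finset (ZMod p)) : ℂ) = p - 1 := by
  rw [card_sdiff_of_subset (subset_univ _), card_univ, ZMod.card, card_singleton,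
    Nat.cast_sub (Fact.out : p.Prime).one_le, Nat.cast_one]

theorem sum_stdAddChar_mul (b : ZMod p) :
    ∑ x : ZMod p, (ZMod.stdAddChar (x * b) : ℂ) = if b = 0 then (p : ℂ) else 0 := by
  rw [AddChar.sum_mulShift b (ZMod.isPrimitive_stdAddChar p), ZMod.card]
  split_ifs <;> simp

theorem sum_univ_eq_zero_add {M α : Type*} [AddCommMonoid M] [Fintype α] [DecidableEq α] [Zero α]
    (f : α → M) : ∑ x, f x = f 0 + ∑ x ∈ univ \ {0}, f x :=
  sum_eq_add_sum_sdiff_singleton_of_mem (mem_univ 0) f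

theorem sum_stdAddChar_mul_nonzero {b : ZMod p} (hb : b ≠ 0) :
    ∑ x ∈ univ \ {0}, (ZMod.stdAddChar (x * b) : ℂ) = -1 := by
  have h := sum_stdAddChar_mul b
  rw [sum_univ_eq_zero_add, if_neg hb, zero_mul, AddChar.map_zero_eq_one] at h
  exact eq_neg_of_add_eq_zero_right h

theorem sum_mul_left_nonzero {M : Type*} [AddCommMonoid M] {c : ZMod p} (hc : c ≠ 0)
    (f : ZMod p → M) : ∑ x ∈ univ \ {0}, f (c * x) = ∑ x ∈ univ \ {0}, f x :=
  sum_bijective (c * ·) (mulLeft_bijective₀ c hc) (by simp [hc]) (by simp)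

theorem kloosterman_zero : kloosterman p 0 = -1 := by
  rw [kloosterman_eq_sum_stdAddChar, ← sum_stdAddChar_mul_nonzero (one_ne_zero (α := ZMod p))]
  simp

theorem sum_kloosterman_mul {s : ZMod p} (hs : s ≠ 0) :
    ∑ u ∈ univ \ {0}, kloosterman p (u * s) = 1 := by
  simp_rw [kloosterman_eq_sum_stdAddChar]
  rw [sum_comm]
  have h : ∀ x ∈ (univ \ {0} : Finset (ZMod p)),
      ∑ u ∈ univ \ {0}, (ZMod.stdAddChar (x + u * s * x⁻¹) : ℂ) =
        -ZMod.stdAddChar (x * 1) := by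
    intro x hx
    have hx0 : x ≠ 0 := by simpa using hx
    simp_rw [AddChar.map_add_eq_mul, ← mul_sum, mul_assoc]
    rw [sum_stdAddChar_mul_nonzero (mul_ne_zero hs (inv_ne_zero hx0))]
    simp
  rw [sum_congr rfl h, sum_neg_distrib, sum_stdAddChar_mul_nonzero one_ne_zero, neg_neg]

/-- Fourier inversion of the Kloosterman sum in its argument. -/
theorem sum_stdAddChar_neg_mul_kloosterman (s : ZMod p) {v : ZMod p} (hs : s ≠ 0) (hv : v ≠ 0) :
    ∑ u, ZMod.stdAddChar (-(u * v)) * kloosterman p (u * s) =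
      p * ZMod.stdAddChar (s * v⁻¹) := by
  simp_rw [kloosterman_eq_sum_stdAddChar, mul_sum]
  rw [sum_comm]
  have h : ∀ x ∈ (univ \ {0} : Finset (ZMod p)),
      ∑ u, (ZMod.stdAddChar (-(u * v)) * ZMod.stdAddChar (x + u * s * x⁻¹) : ℂ) =
        if x = s * v⁻¹ then p * ZMod.stdAddChar (s * v⁻¹) else 0 := by
    intro x hx
    have hx0 : x ≠ 0 := by simpa using hx
    have e : ∀ u, (ZMod.stdAddChar (-(u * v)) * ZMod.stdAddChar (x + u * s * x⁻¹) : ℂ) =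
        ZMod.stdAddChar x * ZMod.stdAddChar (u * (s * x⁻¹ - v)) := by
      intro u
      rw [← AddChar.map_add_eq_mul, ← AddChar.map_add_eq_mul]
      congr 1
      ring
    simp_rw [e, ← mul_sum, sum_stdAddChar_mul]
    have hiff : s * x⁻¹ - v = 0 ↔ x = s * v⁻¹ := by
      rw [sub_eq_zero]
      constructor <;> intro h
      · rw [← h]; field_simp
      · rw [h]; field_simp
    by_cases hc : x = s * v⁻¹
    · rw [if_pos hc, if_pos (hiff.2 hc), hc, mul_comm]
    · rw [if_neg hc, if_neg (mt hiff.1 hc), mul_zero]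
  rw [sum_congr rfl h, sum_ite_eq', if_pos (by simp [hs, hv])]

theorem eq_zero_of_sum_stdAddChar_mul_eq_zero (t : ZMod p → ℂ)
    (h : ∀ w, ∑ s, ZMod.stdAddChar (s * w) * t s = 0) (r : ZMod p) : t r = 0 := by
  have h2 : ∑ w : ZMod p, ZMod.stdAddChar (-(w * r)) * ∑ s, ZMod.stdAddChar (s * w) * t s
      = p * t r := by
    simp_rw [mul_sum]
    rw [sum_comm, sum_eq_single r]
    · simp_rw [← mul_assoc, ← AddChar.map_add_eq_mul, mul_comm r, neg_add_cancel,
        AddChar.map_zero_eq_one]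
      simp
    · intro s _ hs
      have e : ∀ w, (ZMod.stdAddChar (-(w * r)) * (ZMod.stdAddChar (s * w) * t s) : ℂ) =
          ZMod.stdAddChar (w * (s - r)) * t s := by
        intro w
        rw [← mul_assoc, ← AddChar.map_add_eq_mul]
        congr 2
        ring
      simp_rw [e, ← sum_mul, sum_stdAddChar_mul, if_neg (sub_ne_zero.2 hs), zero_mul]
    · simp
  simp_rw [h, mul_zero, sum_const_zero] at h2
  have hp : (p : ℂ) ≠ 0 := Nat.cast_ne_zero.2 (Fact.out : p.Prime).ne_zero
  exact (mul_eq_zero.1 h2.symm).resolve_left hp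

/-- The matrix `(K(us) + p + 1)` has trivial kernel. -/
theorem eq_zero_of_kloosterman_system_eq_zero (t : ZMod p → ℂ)
    (h : ∀ u : ZMod p, u ≠ 0 →
      ∑ s ∈ univ \ {0}, (kloosterman p (u * s) + p + 1) * t s = 0)
    {r : ZMod p} (hr : r ≠ 0) : t r = 0 := by
  have hp : (p : ℂ) ≠ 0 := Nat.cast_ne_zero.2 (Fact.out : p.Prime).ne_zero
  have hsum : ∑ s ∈ univ \ {0}, t s = 0 := by
    have h1 : ∑ u ∈ univ \ {0}, ∑ s ∈ univ \ {0}, (kloosterman p (u * s) + p + 1) * t s =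
        (p : ℂ) ^ 2 * ∑ s ∈ univ \ {0}, t s := by
      rw [sum_comm, mul_sum]
      refine sum_congr rfl fun s hs ↦ ?_
      rw [← sum_mul, sum_add_distrib, sum_add_distrib, sum_kloosterman_mul (by simpa using hs),
        sum_const, sum_const, nsmul_eq_mul, nsmul_eq_mul, card_zmod_nonzero]
      ring
    rw [sum_eq_zero fun u hu ↦ h u (by simpa using hu)] at h1
    exact (mul_eq_zero.1 h1.symm).resolve_left (pow_ne_zero 2 hp)
  have hK : ∀ u : ZMod p, ∑ s ∈ univ \ {0}, kloosterman p (u * s) * t s = 0 := by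
    intro u
    by_cases hu : u = 0
    · simp_rw [hu, zero_mul, kloosterman_zero, ← mul_sum, hsum, mul_zero]
    · have := h u hu
      simp_rw [add_mul, sum_add_distrib, ← mul_sum, hsum] at this
      simpa using this
  have hF : ∀ w, ∑ s ∈ univ \ {0}, ZMod.stdAddChar (s * w) * t s = 0 := by
    intro w
    by_cases hw : w = 0
    · simpa [hw] using hsum
    · have e : ∑ u : ZMod p, ZMod.stdAddChar (-(u * w⁻¹)) *
          ∑ s ∈ univ \ {0}, kloosterman p (u * s) * t s =
          p * ∑ s ∈ univ \ {0}, ZMod.stdAddChar (s * w) * t s := by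
        simp_rw [mul_sum]
        rw [sum_comm]
        refine sum_congr rfl fun s hs ↦ ?_
        simp_rw [← mul_assoc, ← sum_mul]
        rw [sum_stdAddChar_neg_mul_kloosterman s (by simpa using hs) (inv_ne_zero hw), inv_inv]
      simp_rw [hK, mul_zero, sum_const_zero] at e
      exact (mul_eq_zero.1 e.symm).resolve_left hp
  have key := eq_zero_of_sum_stdAddChar_mul_eq_zero (fun s ↦ if s = 0 then 0 else t s) (fun w ↦ by
    rw [sum_univ_eq_zero_add, if_pos rfl, mul_zero, zero_add, ← hF w]
    refine sum_congr rfl fun s hs ↦ ?_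
    rw [if_neg (by simpa using hs)]) r
  simpa [hr] using key

end Characters

section Counting

variable {p : ℕ} {F : Type*} [Field F] [Algebra (ZMod p) F]

theorem traceInvCount_comm (i j : ZMod p) :
    traceInvCount p F i j = traceInvCount p F j i :=
  Nat.card_congr ((Equiv.inv F).subtypeEquiv fun x ↦ by
    simp [and_comm])

theorem traceInvCount_eq_card_filter [Fintype F] [DecidableEq F] (i j : ZMod p) :
    traceInvCount p F i j = #{x ∈ (univ \ {0} : Finset F) |
      (Algebra.trace (ZMod p) F x, Algebra.trace (ZMod p) F x⁻¹) = (i, j)} := by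
  rw [traceInvCount, Nat.card_eq_fintype_card, Fintype.card_subtype]
  congr 1
  ext x
  simp

variable [Fact p.Prime]

theorem traceInvCount_mul_inv_mul {c : ZMod p} (hc : c ≠ 0) (i j : ZMod p) :
    traceInvCount p F (c * i) (c⁻¹ * j) = traceInvCount p F i j := by
  refine (Nat.card_congr ((MulAction.toPerm (Units.mk0 c hc) : Equiv.Perm F).subtypeEquiv
    fun x ↦ ?_)).symm
  have h1 : (Units.mk0 c hc • x : F) = c • x := rfl
  have h2 : (c • x)⁻¹ = c⁻¹ • x⁻¹ := by
    simp [Algebra.smul_def, mul_comm]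
  simp [h1, h2, hc]

theorem traceInvCount_zero_left {j : ZMod p} (hj : j ≠ 0) :
    traceInvCount p F 0 j = traceInvCount p F 1 0 := by
  rw [traceInvCount_comm 1, ← traceInvCount_mul_inv_mul hj 0 j, mul_zero, inv_mul_cancel₀ hj]

theorem traceInvCount_zero_right {i : ZMod p} (hi : i ≠ 0) :
    traceInvCount p F i 0 = traceInvCount p F 1 0 := by
  rw [traceInvCount_comm, traceInvCount_zero_left hi]

theorem sum_traceInvCount_mul_stdAddChar (u : ZMod p) :
    ∑ i ∈ univ \ {0}, ∑ j ∈ univ \ {0},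
        (traceInvCount p F i j : ℂ) * ZMod.stdAddChar (i + u * j) =
      ∑ s ∈ univ \ {0}, kloosterman p (u * s) * traceInvCount p F 1 s := by
  simp_rw [kloosterman_eq_sum_stdAddChar, sum_mul]
  rw [sum_comm (s := univ \ {0}) (t := univ \ {0})
    (f := fun s x ↦ ZMod.stdAddChar (x + u * s * x⁻¹) * (traceInvCount p F 1 s : ℂ))]
  refine sum_congr rfl fun i hi ↦ ?_
  have hi0 : i ≠ 0 := by simpa using hi
  rw [← sum_mul_left_nonzero (inv_ne_zero hi0)]
  refine sum_congr rfl fun s _ ↦ ?_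
  have := traceInvCount_mul_inv_mul (F := F) hi0 1 s
  rw [mul_one] at this
  rw [this, mul_comm, mul_comm i⁻¹, mul_assoc]

variable [Fintype F]

theorem card_mul_card_trace_eq (i : ZMod p) :
    p * #{x : F | Algebra.trace (ZMod p) F x = i} = Fintype.card F := by
  have hsurj := Algebra.trace_surjective (ZMod p) F
  have h := card_eq_sum_card_fiberwise (s := (univ : Finset F)) (t := univ)
    (f := Algebra.trace (ZMod p) F) (by simp)
  rw [← card_univ, h, sum_congr rfl fun j _ ↦
    AddMonoidHom.card_fiber_eq_of_mem_range (Algebra.trace (ZMod p) F) (hsurj j) (hsurj i)]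
  simp [ZMod.card]

variable [DecidableEq F]

theorem sum_trace_trace_inv (g : ZMod p → ZMod p → ℂ) :
    ∑ x ∈ (univ \ {0} : Finset F), g (Algebra.trace (ZMod p) F x) (Algebra.trace (ZMod p) F x⁻¹) =
      ∑ i, ∑ j, traceInvCount p F i j * g i j := by
  rw [← sum_fiberwise' (univ \ {0} : Finset F)
    (fun x ↦ (Algebra.trace (ZMod p) F x, Algebra.trace (ZMod p) F x⁻¹)) (fun a ↦ g a.1 a.2),
    Fintype.sum_prod_type]
  simp_rw [sum_const, nsmul_eq_mul, traceInvCount_eq_card_filter]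

theorem mul_sum_traceInvCount (i : ZMod p) :
    (p : ℂ) * ((∑ j, (traceInvCount p F i j : ℂ)) + if i = 0 then 1 else 0) =
      Fintype.card F := by
  have h := sum_trace_trace_inv (F := F) (fun a _ ↦ if a = i then (1 : ℂ) else 0)
  simp only [mul_ite, mul_one, mul_zero] at h
  rw [sum_eq_single i (by intro b _ hb; simp [hb]) (by simp)] at h
  simp only [if_true] at h
  rw [← h, ← card_mul_card_trace_eq (F := F) i, Nat.cast_mul, card_filter, Nat.cast_sum,
    sum_univ_eq_zero_add, map_zero, add_comm]
  simp [eq_comm]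

theorem kloostermanExt_eq_sum_traceInvCount (u : ZMod p) :
    kloostermanExt p F u =
      ∑ i, ∑ j, (traceInvCount p F i j : ℂ) * ZMod.stdAddChar (i + u * j) := by
  rw [← sum_trace_trace_inv, kloostermanExt]
  refine sum_congr rfl fun x _ ↦ ?_
  rw [ZMod.stdAddChar_apply, ZMod.toCircle_apply, map_add, ← Algebra.smul_def, map_smul,
    smul_eq_mul]

theorem sum_kloosterman_mul_traceInvCount {u : ZMod p} (hu : u ≠ 0) :
    ∑ s ∈ univ \ {0}, (kloosterman p (u * s) + p + 1) * (traceInvCount p F 1 s : ℂ) =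
      kloostermanExt p F u + Fintype.card F + 1 := by
  have hp : (p : ℂ) ≠ 0 := Nat.cast_ne_zero.2 (Fact.out : p.Prime).ne_zero
  have hrow0 := mul_sum_traceInvCount (F := F) (0 : ZMod p)
  have hrow1 := mul_sum_traceInvCount (F := F) (1 : ZMod p)
  rw [sum_univ_eq_zero_add] at hrow0 hrow1
  rw [if_pos rfl, sum_congr rfl fun j hj ↦ by rw [traceInvCount_zero_left (by simpa using hj)],
    sum_const, nsmul_eq_mul, card_zmod_nonzero] at hrow0
  rw [if_neg one_ne_zero] at hrow1
  have hleft : ∑ j ∈ univ \ {0}, (traceInvCount p F 0 j : ℂ) * ZMod.stdAddChar (0 + u * j) =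
      -traceInvCount p F 1 0 := by
    rw [sum_congr rfl fun j hj ↦ by
        rw [traceInvCount_zero_left (by simpa using hj), zero_add, mul_comm u],
      ← mul_sum, sum_stdAddChar_mul_nonzero hu, mul_neg_one]
  have hright : ∑ i ∈ univ \ {0}, (traceInvCount p F i 0 : ℂ) * ZMod.stdAddChar (i + u * 0) =
      -traceInvCount p F 1 0 := by
    rw [sum_congr rfl fun i hi ↦ by
        rw [traceInvCount_zero_right (by simpa using hi), mul_zero, add_zero],
      ← mul_sum, ← mul_neg_one, ← sum_stdAddChar_mul_nonzero (one_ne_zero (α := ZMod p))]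
    simp
  have hsplit : kloostermanExt p F u = traceInvCount p F 0 0 - 2 * traceInvCount p F 1 0 +
      ∑ s ∈ univ \ {0}, kloosterman p (u * s) * traceInvCount p F 1 s := by
    rw [kloostermanExt_eq_sum_traceInvCount, sum_univ_eq_zero_add, sum_univ_eq_zero_add]
    simp_rw [fun i : ZMod p ↦ sum_univ_eq_zero_add
      (fun j ↦ (traceInvCount p F i j : ℂ) * ZMod.stdAddChar (i + u * j))]
    rw [sum_add_distrib, sum_traceInvCount_mul_stdAddChar, hleft, hright, mul_zero, add_zero,
      AddChar.map_zero_eq_one]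
    ring
  simp_rw [add_mul, sum_add_distrib, ← mul_sum, hsplit]
  apply mul_left_cancel₀ hp
  linear_combination ((p : ℂ) + 1) * hrow1 - hrow0

end Counting

/-- The quantities `T_{1s}`, for `s` ranging over the nonzero elements of `F_p`, are the
unique solution of the linear system `Σ_s (K(us) + p + 1) t_s = K^(m)(u) + q + 1`,
`u` ranging over the nonzero elements of `F_p`. -/
theorem kloosterman_linear_system_unique (p m : ℕ) [Fact p.Prime] (F : Type*) [Field F]
    [Fintype F] [DecidableEq F] [Algebra (ZMod p) F] (hq : Fintype.card F = p ^ m) :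
    (∀ u : ZMod p, u ≠ 0 →
      ∑ s : {s : ZMod p // s ≠ 0}, (kloosterman p (u * s) + p + 1) *
          (Nat.card {x : F | x ≠ 0 ∧ Algebra.trace (ZMod p) F x = 1 ∧
            Algebra.trace (ZMod p) F x⁻¹ = (s : ZMod p)} : ℂ) =
        kloostermanExt p F u + (p : ℂ) ^ m + 1) ∧
    (∀ t : {s : ZMod p // s ≠ 0} → ℂ,
      (∀ u : ZMod p, u ≠ 0 →
        ∑ s : {s : ZMod p // s ≠ 0}, (kloosterman p (u * s) + p + 1) * t s =
          kloostermanExt p F u + (p : ℂ) ^ m + 1) →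
      ∀ s : {s : ZMod p // s ≠ 0},
        t s = (Nat.card {x : F | x ≠ 0 ∧ Algebra.trace (ZMod p) F x = 1 ∧
          Algebra.trace (ZMod p) F x⁻¹ = (s : ZMod p)} : ℂ)) := by
  have hsub (f : ZMod p → ℂ) :
      ∑ s : {s : ZMod p // s ≠ 0}, f s = ∑ s ∈ univ \ {0}, f s :=
    (sum_subtype (univ \ {0}) (by simp) f).symm
  have hexists : ∀ u : ZMod p, u ≠ 0 →
      ∑ s : {s : ZMod p // s ≠ 0}, (kloosterman p (u * s) + p + 1) *
        (traceInvCount p F 1 s : ℂ) = kloostermanExt p F u + (p : ℂ) ^ m + 1 := by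
    intro u hu
    rw [hsub fun s ↦ (kloosterman p (u * s) + p + 1) * (traceInvCount p F 1 s : ℂ),
      sum_kloosterman_mul_traceInvCount hu, hq, Nat.cast_pow]
  refine ⟨hexists, fun t ht s ↦ sub_eq_zero.1 ?_⟩
  have key := eq_zero_of_kloosterman_system_eq_zero
    (fun r ↦ if hr : r ≠ 0 then t ⟨r, hr⟩ - traceInvCount p F 1 r else 0) (fun u hu ↦ by
      rw [← hsub, ← sub_eq_zero.2 ((ht u hu).trans (hexists u hu).symm), ← sum_sub_distrib]
      refine sum_congr rfl fun r _ ↦ ?_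
      rw [dif_pos r.2, mul_sub]) s.2
  rwa [dif_pos s.2] at key
end

section
/- For binary fields F_{2^m}, the number of nonzero elements x with tr(x) = tr(x^{-1}) = 1 equals T_{11} = (2^m + 1)/4 + (1/2^{m+1}) · Σ_{r=0}^{⌊m/2⌋} (-1)^{m+r+1} · C(m, 2r) · 7^r. -/
open Polynomial

/-- The nontrivial additive character of `𝔽₂`, with values in `ℤ`. -/
def binSign (a : ZMod 2) : ℤ := if a = 0 then 1 else -1

theorem binSign_add (a b : ZMod 2) : binSign (a + b) = binSign a * binSign b := by
  revert a b; decide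

theorem binSign_natCast_mul (k : ℕ) (a : ZMod 2) : binSign (k * a) = binSign a ^ k := by
  induction k with
  | zero => simp [binSign]
  | succ k ih => rw [Nat.cast_succ, add_mul, one_mul, binSign_add, ih, pow_succ]

theorem ZMod.two_eq_one_of_ne_zero {a : ZMod 2} (h : a ≠ 0) : a = 1 := by
  revert a; decide

theorem monic_of_ne_zero_zmod_two {f : (ZMod 2)[X]} (hf : f ≠ 0) : f.Monic :=
  ZMod.two_eq_one_of_ne_zero (leadingCoeff_ne_zero.mpr hf)

/-- The Kloosterman character on nonzero polynomials over `𝔽₂`: it sends a polynomial with nonzero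
constant term to the sign of the sum of its roots and of their inverses. -/
noncomputable def klChar (f : (ZMod 2)[X]) : ℤ :=
  if f.coeff 0 = 0 then 0 else binSign (f.nextCoeff + f.coeff 1)

theorem klChar_one : klChar 1 = 1 := by
  simp [klChar, binSign, coeff_one, nextCoeff]

theorem klChar_mul {f g : (ZMod 2)[X]} (hf : f ≠ 0) (hg : g ≠ 0) :
    klChar (f * g) = klChar f * klChar g := by
  unfold klChar
  rw [mul_coeff_zero, mul_coeff_one,
    (monic_of_ne_zero_zmod_two hf).nextCoeff_mul (monic_of_ne_zero_zmod_two hg)]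
  by_cases h0 : f.coeff 0 = 0
  · simp [h0]
  by_cases h1 : g.coeff 0 = 0
  · simp [h1]
  simp only [ZMod.two_eq_one_of_ne_zero h0, ZMod.two_eq_one_of_ne_zero h1, mul_one, one_mul,
    one_ne_zero, if_false, ← binSign_add]
  congr 1
  ring

theorem klChar_pow {f : (ZMod 2)[X]} (hf : f ≠ 0) (k : ℕ) : klChar (f ^ k) = klChar f ^ k := by
  induction k with
  | zero => simp [klChar_one]
  | succ k ih => rw [pow_succ, klChar_mul (pow_ne_zero k hf) hf, ih, pow_succ]

theorem finite_polysOfDegree (d : ℕ) : {f : (ZMod 2)[X] | f ≠ 0 ∧ f.natDegree = d}.Finite := by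
  have : Finite (degreeLT (ZMod 2) (d + 1)) :=
    Finite.of_equiv _ (degreeLTEquiv (ZMod 2) (d + 1)).symm.toEquiv
  refine (Set.toFinite (degreeLT (ZMod 2) (d + 1) : Set (ZMod 2)[X])).subset ?_
  rintro f ⟨h0, rfl⟩
  simp only [SetLike.mem_coe, mem_degreeLT]
  exact lt_of_le_of_lt degree_le_natDegree (by exact_mod_cast Nat.lt_succ_self _)

/-- The nonzero polynomials of degree `d` over `𝔽₂`. -/
noncomputable def polysOfDegree (d : ℕ) : Finset (ZMod 2)[X] := (finite_polysOfDegree d).toFinset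

theorem mem_polysOfDegree {d : ℕ} {f : (ZMod 2)[X]} :
    f ∈ polysOfDegree d ↔ f ≠ 0 ∧ f.natDegree = d := by
  simp [polysOfDegree]

open Classical in
/-- The irreducible polynomials of degree `d` over `𝔽₂`. -/
noncomputable def irredsOfDegree (d : ℕ) : Finset (ZMod 2)[X] :=
  (polysOfDegree d).filter Irreducible

theorem mem_irredsOfDegree {d : ℕ} {f : (ZMod 2)[X]} :
    f ∈ irredsOfDegree d ↔ Irreducible f ∧ f.natDegree = d := by
  simp only [irredsOfDegree, Finset.mem_filter, mem_polysOfDegree]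
  exact ⟨fun h => ⟨h.2, h.1.2⟩, fun h => ⟨⟨h.1.ne_zero, h.2⟩, h.1⟩⟩

/-- The coefficients of the `L`-function of `klChar`. -/
noncomputable def klCoeff (d : ℕ) : ℤ := ∑ f ∈ polysOfDegree d, klChar f

/-- The Kloosterman sum over the field with `2 ^ j` elements, as a sum over irreducibles. -/
noncomputable def klSum (j : ℕ) : ℤ :=
  ∑ p ∈ j.divisorsAntidiagonal, ∑ P ∈ irredsOfDegree p.1, (p.1 : ℤ) * klChar P ^ p.2

theorem polysOfDegree_zero : polysOfDegree 0 = {1} := by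
  ext f
  rw [mem_polysOfDegree, Finset.mem_singleton]
  refine ⟨fun h => (monic_of_ne_zero_zmod_two h.1).natDegree_eq_zero.mp h.2, ?_⟩
  rintro rfl
  simp

theorem klCoeff_zero : klCoeff 0 = 1 := by
  simp [klCoeff, polysOfDegree_zero, klChar_one]

theorem polysOfDegree_one : polysOfDegree 1 = {X, X + 1} := by
  ext f
  simp only [mem_polysOfDegree, Finset.mem_insert, Finset.mem_singleton]
  constructor
  · rintro ⟨h0, h1⟩
    have hm := monic_of_ne_zero_zmod_two h0
    have hf := hm.eq_X_add_C h1
    by_cases h : f.coeff 0 = 0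
    · left; rw [hf, h]; simp
    · right; rw [hf, ZMod.two_eq_one_of_ne_zero h]; simp
  · have h : (X + 1 : (ZMod 2)[X]).natDegree = 1 := natDegree_X_add_C 1
    rintro (rfl | rfl)
    · simp
    · exact ⟨ne_zero_of_natDegree_gt (n := 0) (by omega), h⟩

theorem klCoeff_one : klCoeff 1 = 1 := by
  have h : (X + 1 : (ZMod 2)[X]).natDegree = 1 := natDegree_X_add_C 1
  have h2 : (1 : ZMod 2) + 1 = 0 := by decide
  rw [klCoeff, polysOfDegree_one, Finset.sum_pair (by simp)]
  simp [klChar, binSign, nextCoeff, h, coeff_one, coeff_X, h2]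

theorem polysOfDegree_two :
    polysOfDegree 2 = {X ^ 2, X ^ 2 + X, X ^ 2 + 1, X ^ 2 + X + 1} := by
  have key : ∀ a b : ZMod 2, (X ^ 2 + C a * X + C b).natDegree = 2 := fun a b => by
    compute_degree!
  have hne : ∀ a b : ZMod 2, X ^ 2 + C a * X + C b ≠ 0 := fun a b =>
    ne_zero_of_natDegree_gt (n := 0) (by rw [key]; omega)
  ext f
  simp only [mem_polysOfDegree, Finset.mem_insert, Finset.mem_singleton]
  constructor
  · rintro ⟨h0, h1⟩
    have hm := monic_of_ne_zero_zmod_two h0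
    have hf := hm.as_sum
    rw [h1, Finset.sum_range_succ, Finset.sum_range_one] at hf
    by_cases h : f.coeff 0 = 0 <;> by_cases h' : f.coeff 1 = 0 <;>
    · first
      | rw [h] at hf
      | rw [ZMod.two_eq_one_of_ne_zero h] at hf
      first
      | rw [h'] at hf
      | rw [ZMod.two_eq_one_of_ne_zero h'] at hf
      simp only [C_0, C_1, pow_zero, pow_one, zero_mul, one_mul, zero_add, add_zero] at hf
      rw [hf]
      simp [add_assoc, add_comm (1 : (ZMod 2)[X]) X]
  · rintro (rfl | rfl | rfl | rfl)
    · simp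
    · simpa using And.intro (hne 1 0) (key 1 0)
    · simpa using And.intro (hne 0 1) (key 0 1)
    · simpa using And.intro (hne 1 1) (key 1 1)

theorem klCoeff_two : klCoeff 2 = 2 := by
  have key : ∀ a b : ZMod 2, (X ^ 2 + C a * X + C b).natDegree = 2 := fun a b => by
    compute_degree!
  have k1 : (X ^ 2 + 1 : (ZMod 2)[X]).natDegree = 2 := by simpa using key 0 1
  have k2 : (X ^ 2 + X + 1 : (ZMod 2)[X]).natDegree = 2 := by simpa using key 1 1
  have h2 : (1 : ZMod 2) + 1 = 0 := by decide
  have hX : (X : (ZMod 2)[X]) ≠ 0 := X_ne_zero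
  have hX1 : (X + 1 : (ZMod 2)[X]) ≠ 0 := fun h => by
    simpa [coeff_one] using congrArg (fun p => coeff p 1) h
  have hX1' : (X : (ZMod 2)[X]) ≠ 1 := fun h => by
    simpa [coeff_one] using congrArg (fun p => coeff p 1) h
  rw [klCoeff, polysOfDegree_two, Finset.sum_insert, Finset.sum_insert, Finset.sum_pair]
  · simp [klChar, binSign, nextCoeff, k1, k2, coeff_one, coeff_X, coeff_X_pow, h2]
  · intro h
    apply hX
    linear_combination -h
  · simp only [Finset.mem_insert, Finset.mem_singleton, not_or]
    refine ⟨fun h => hX1' ?_, fun h => ?_⟩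
    · linear_combination h
    · exact one_ne_zero (α := (ZMod 2)[X]) (by linear_combination -h)
  · simp only [Finset.mem_insert, Finset.mem_singleton, not_or]
    refine ⟨fun h => hX ?_, fun h => ?_, fun h => hX1 ?_⟩
    · linear_combination -h
    · exact one_ne_zero (α := (ZMod 2)[X]) (by linear_combination -h)
    · linear_combination -h

theorem klCoeff_eq_zero {d : ℕ} (hd : 3 ≤ d) : klCoeff d = 0 := by
  have hdeg : ∀ f ∈ polysOfDegree d, (f + X).natDegree = d := fun f hf => by
    obtain ⟨-, rfl⟩ := mem_polysOfDegree.mp hf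
    exact natDegree_add_eq_left_of_natDegree_lt (by rw [natDegree_X]; omega)
  have hX : (X : (ZMod 2)[X]) + X = 0 := CharTwo.add_self_eq_zero X
  have hneg : ∀ f ∈ polysOfDegree d, klChar f + klChar (f + X) = 0 := fun f hf => by
    have hd' := hdeg f hf
    obtain ⟨-, hf'⟩ := mem_polysOfDegree.mp hf
    have hn : (f + X).nextCoeff = f.nextCoeff := by
      rw [nextCoeff_of_natDegree_pos (by omega), nextCoeff_of_natDegree_pos (by omega), hd', hf',
        coeff_add, coeff_X_of_ne_one (by omega), add_zero]
    have h1 : binSign 1 = -1 := by decide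
    unfold klChar
    rw [hn, coeff_add, coeff_add, coeff_X_zero, coeff_X_one, add_zero, ← add_assoc, binSign_add _ 1,
      h1]
    split_ifs <;> ring
  refine Finset.sum_involution (fun f _ => f + X) hneg (fun f hf _ h => ?_) (fun f hf => ?_)
    (fun f hf => by rw [add_assoc, hX, add_zero])
  · exact X_ne_zero (R := ZMod 2) (by linear_combination h)
  · refine mem_polysOfDegree.mpr ⟨ne_zero_of_natDegree_gt (n := 0) ?_, hdeg f hf⟩
    rw [hdeg f hf]; omega

open Classical in
theorem sum_klChar_filter_pow_dvd {d e k : ℕ} (h : e * k ≤ d) {P : (ZMod 2)[X]}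
    (hP : P ∈ irredsOfDegree e) :
    ∑ f ∈ polysOfDegree d, (if P ^ k ∣ f then klChar f else 0) =
      klChar P ^ k * klCoeff (d - e * k) := by
  obtain ⟨hi, rfl⟩ := mem_irredsOfDegree.mp hP
  have hPk : P ^ k ≠ 0 := pow_ne_zero k hi.ne_zero
  rw [klCoeff, Finset.mul_sum, ← Finset.sum_filter]
  symm
  refine Finset.sum_bij (fun g _ => P ^ k * g) (fun g hg => ?_)
    (fun g _ g' _ h => mul_left_cancel₀ hPk h) (fun f hf => ?_) (fun g hg => ?_)
  · obtain ⟨hg0, hg⟩ := mem_polysOfDegree.mp hg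
    refine Finset.mem_filter.mpr ⟨mem_polysOfDegree.mpr ⟨mul_ne_zero hPk hg0, ?_⟩, dvd_mul_right _ _⟩
    rw [natDegree_mul hPk hg0, natDegree_pow, hg, mul_comm k]
    omega
  · obtain ⟨hf, g, rfl⟩ := Finset.mem_filter.mp hf
    obtain ⟨hf0, hf⟩ := mem_polysOfDegree.mp hf
    have hg0 := right_ne_zero_of_mul hf0
    refine ⟨g, mem_polysOfDegree.mpr ⟨hg0, ?_⟩, rfl⟩
    rw [natDegree_mul hPk hg0, natDegree_pow, mul_comm k] at hf
    omega
  · obtain ⟨hg0, hg⟩ := mem_polysOfDegree.mp hg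
    rw [klChar_mul hPk hg0, klChar_pow hi.ne_zero]

open Classical UniqueFactorizationMonoid in
theorem pow_dvd_iff_le_count_normalizedFactors {f P : (ZMod 2)[X]} (hf : f ≠ 0)
    (hP : Irreducible P) (k : ℕ) : P ^ k ∣ f ↔ k ≤ (normalizedFactors f).count P := by
  rw [pow_dvd_iff_le_emultiplicity, emultiplicity_eq_count_normalizedFactors hP hf,
    (monic_of_ne_zero_zmod_two hP.ne_zero).normalize_eq_self, Nat.cast_le]

open Classical UniqueFactorizationMonoid in
theorem sum_degree_of_pow_dvd {d : ℕ} {f : (ZMod 2)[X]} (hf : f ∈ polysOfDegree d) :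
    ∑ j ∈ Finset.Icc 1 d, ∑ p ∈ j.divisorsAntidiagonal, ∑ P ∈ irredsOfDegree p.1,
      (if P ^ p.2 ∣ f then (p.1 : ℤ) else 0) = d := by
  obtain ⟨hf0, rfl⟩ := mem_polysOfDegree.mp hf
  have hdeg : ((f.natDegree : ℕ) : ℤ) = ∑ P ∈ (normalizedFactors f).toFinset,
      ∑ k ∈ Finset.Icc 1 ((normalizedFactors f).count P), (P.natDegree : ℤ) := by
    have h1 : (normalizedFactors f).prod = f := by
      rw [prod_normalizedFactors_eq hf0, (monic_of_ne_zero_zmod_two hf0).normalize_eq_self]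
    conv_lhs => rw [← h1, natDegree_multiset_prod _ (zero_notMem_normalizedFactors f),
      Finset.sum_multiset_map_count]
    simp
  rw [hdeg]
  simp_rw [← Finset.sum_filter]
  simp_rw [Finset.sum_sigma']
  refine Finset.sum_bij' (fun q _ => ⟨q.2.2, q.2.1.2⟩)
    (fun q _ => ⟨q.1.natDegree * q.2, (q.1.natDegree, q.2), q.1⟩) ?_ ?_ ?_ ?_ ?_
  · rintro ⟨j, ⟨e, k⟩, P⟩ h
    simp only [Finset.mem_sigma, Finset.mem_Icc, Nat.mem_divisorsAntidiagonal,
      Finset.mem_filter, mem_irredsOfDegree] at h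
    obtain ⟨hj, ⟨rfl, hj0⟩, ⟨hP, rfl⟩, hdvd⟩ := h
    have hk : 1 ≤ k := Nat.one_le_iff_ne_zero.mpr (right_ne_zero_of_mul hj0)
    have hc := (pow_dvd_iff_le_count_normalizedFactors hf0 hP k).mp hdvd
    simp only [Finset.mem_sigma, Multiset.mem_toFinset, Finset.mem_Icc]
    exact ⟨Multiset.count_pos.mp (by omega), hk, hc⟩
  · rintro ⟨P, k⟩ h
    simp only [Finset.mem_sigma, Multiset.mem_toFinset, Finset.mem_Icc] at h
    obtain ⟨hP, hk, hc⟩ := h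
    have hi := irreducible_of_normalized_factor P hP
    have hdvd := (pow_dvd_iff_le_count_normalizedFactors hf0 hi k).mpr hc
    have hpos := hi.natDegree_pos
    have hle := natDegree_le_of_dvd hdvd hf0
    rw [natDegree_pow, mul_comm] at hle
    simp only [Finset.mem_sigma, Finset.mem_Icc, Nat.mem_divisorsAntidiagonal,
      Finset.mem_filter, mem_irredsOfDegree]
    simp [hle, hi, hdvd, Nat.one_le_iff_ne_zero, hpos.ne', Nat.one_le_iff_ne_zero.mp hk]
  · rintro ⟨j, ⟨e, k⟩, P⟩ h
    simp only [Finset.mem_sigma, Finset.mem_Icc, Nat.mem_divisorsAntidiagonal,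
      Finset.mem_filter, mem_irredsOfDegree] at h
    obtain ⟨hj, ⟨rfl, hj0⟩, ⟨hP, rfl⟩, hdvd⟩ := h
    rfl
  · rintro ⟨P, k⟩ h
    rfl
  · rintro ⟨j, ⟨e, k⟩, P⟩ h
    simp only [Finset.mem_sigma, Finset.mem_filter, mem_irredsOfDegree] at h
    simp [h.2.2.1.2]

/-- The coefficientwise form of the logarithmic derivative of the Euler product of `klChar`. -/
theorem natCast_mul_klCoeff (d : ℕ) :
    (d : ℤ) * klCoeff d = ∑ j ∈ Finset.Icc 1 d, klSum j * klCoeff (d - j) := by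
  classical
  have h1 : ∀ j ∈ Finset.Icc 1 d, klSum j * klCoeff (d - j) =
      ∑ f ∈ polysOfDegree d, klChar f * ∑ p ∈ j.divisorsAntidiagonal, ∑ P ∈ irredsOfDegree p.1,
        (if P ^ p.2 ∣ f then (p.1 : ℤ) else 0) := fun j hj => by
    simp_rw [klSum, Finset.sum_mul, Finset.mul_sum]
    rw [Finset.sum_comm]
    refine Finset.sum_congr rfl fun p hp => ?_
    rw [Finset.sum_comm]
    refine Finset.sum_congr rfl fun P hP => ?_
    obtain ⟨rfl, -⟩ := Nat.mem_divisorsAntidiagonal.mp hp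
    rw [mul_assoc, ← sum_klChar_filter_pow_dvd (Finset.mem_Icc.mp hj).2 hP, Finset.mul_sum]
    refine Finset.sum_congr rfl fun f _ => ?_
    split_ifs <;> ring
  rw [Finset.sum_congr rfl h1, Finset.sum_comm, klCoeff, Finset.mul_sum]
  refine Finset.sum_congr rfl fun f hf => ?_
  rw [← Finset.mul_sum, sum_degree_of_pow_dvd hf, mul_comm]

theorem klSum_one : klSum 1 = 1 := by
  have h := natCast_mul_klCoeff 1
  simpa [klCoeff_zero, klCoeff_one] using h.symm

theorem klSum_two : klSum 2 = 3 := by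
  have h := natCast_mul_klCoeff 2
  rw [Finset.sum_Icc_succ_top (by omega)] at h
  simp [klCoeff_zero, klCoeff_one, klCoeff_two, klSum_one] at h
  linarith

theorem klSum_add_two {n : ℕ} (hn : 1 ≤ n) : klSum (n + 2) = -klSum (n + 1) - 2 * klSum n := by
  obtain ⟨k, rfl⟩ := Nat.exists_eq_add_of_le' hn
  have h := natCast_mul_klCoeff (k + 1 + 2)
  rw [klCoeff_eq_zero (by omega), Finset.sum_Icc_succ_top (by omega),
    Finset.sum_Icc_succ_top (by omega), Finset.sum_Icc_succ_top (by omega),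
    Finset.sum_eq_zero fun j hj => ?_] at h
  · rw [show k + 1 + 2 - (k + 1) = 2 by omega, show k + 1 + 2 - (k + 1 + 1) = 1 by omega,
      show k + 1 + 2 - (k + 1 + 1 + 1) = 0 by omega, klCoeff_zero, klCoeff_one, klCoeff_two] at h
    simp only [show k + 1 + 1 + 1 = k + 1 + 2 by omega] at h
    linarith
  · rw [klCoeff_eq_zero (by have := Finset.mem_Icc.mp hj; omega), mul_zero]

theorem sum_range_choose_even_succ (m : ℕ) {N : ℕ} (hN : m < 2 * N) :
    ∑ r ∈ Finset.range (N + 1), (-7 : ℝ) ^ r * (m + 1).choose (2 * r) =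
      ∑ r ∈ Finset.range (N + 1), (-7 : ℝ) ^ r * m.choose (2 * r) -
        7 * ∑ r ∈ Finset.range (N + 1), (-7 : ℝ) ^ r * m.choose (2 * r + 1) := by
  rw [Finset.sum_range_succ (fun r => (-7 : ℝ) ^ r * m.choose (2 * r + 1)),
    Nat.choose_eq_zero_of_lt (by omega : m < 2 * N + 1), Finset.sum_range_succ' _ N,
    Finset.sum_range_succ' _ N, Nat.cast_zero, mul_zero ((-7 : ℝ) ^ N), add_zero, Finset.mul_sum]
  have h : ∀ r ∈ Finset.range N, (-7 : ℝ) ^ (r + 1) * (m + 1).choose (2 * (r + 1)) =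
      (-7 : ℝ) ^ (r + 1) * m.choose (2 * (r + 1)) - 7 * ((-7 : ℝ) ^ r * m.choose (2 * r + 1)) :=
    fun r _ => by
      rw [show 2 * (r + 1) = 2 * r + 1 + 1 by ring, Nat.choose_succ_succ]
      push_cast
      ring
  rw [Finset.sum_congr rfl h, Finset.sum_sub_distrib]
  simp
  ring

theorem sum_range_choose_odd_succ (m N : ℕ) :
    ∑ r ∈ Finset.range N, (-7 : ℝ) ^ r * (m + 1).choose (2 * r + 1) =
      ∑ r ∈ Finset.range N, (-7 : ℝ) ^ r * m.choose (2 * r) +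
        ∑ r ∈ Finset.range N, (-7 : ℝ) ^ r * m.choose (2 * r + 1) := by
  rw [← Finset.sum_add_distrib]
  refine Finset.sum_congr rfl fun r _ => ?_
  rw [Nat.choose_succ_succ]
  push_cast
  ring

/-- The sum `∑ (-7) ^ r * C(m, 2r)`, that is, the real part of `(1 + √-7) ^ m`. -/
noncomputable def evenSum (m : ℕ) : ℝ :=
  ∑ r ∈ Finset.range (m / 2 + 1), (-7 : ℝ) ^ r * m.choose (2 * r)

theorem evenSum_eq {m N : ℕ} (hN : m < 2 * N) :
    evenSum m = ∑ r ∈ Finset.range N, (-7 : ℝ) ^ r * m.choose (2 * r) := by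
  refine Finset.sum_subset (Finset.range_subset_range.mpr (by omega)) fun r _ hr => ?_
  rw [Nat.choose_eq_zero_of_lt (by rw [Finset.mem_range] at hr; omega), Nat.cast_zero, mul_zero]

theorem evenSum_add_two (m : ℕ) : evenSum (m + 2) = 2 * evenSum (m + 1) - 8 * evenSum m := by
  have h1 := sum_range_choose_even_succ (m + 1) (N := m + 2) (by omega)
  have h2 := sum_range_choose_even_succ m (N := m + 2) (by omega)
  have h3 := sum_range_choose_odd_succ m (m + 2 + 1)
  rw [evenSum_eq (N := m + 2 + 1) (by omega), evenSum_eq (N := m + 2 + 1) (by omega),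
    evenSum_eq (N := m + 2 + 1) (by omega)]
  linarith

theorem klSum_eq {m : ℕ} (hm : 1 ≤ m) : (klSum m : ℝ) = (-1) ^ (m + 1) * 2 / 2 ^ m * evenSum m := by
  induction m using Nat.strong_induction_on with
  | _ m ih =>
    match m, hm with
    | 1, _ => norm_num [klSum_one, evenSum]
    | 2, _ => norm_num [klSum_two, evenSum, Finset.sum_range_succ]
    | n + 3, _ =>
      rw [klSum_add_two (by omega), evenSum_add_two]
      push_cast
      rw [ih (n + 1 + 1) (by omega) (by omega), ih (n + 1) (by omega) (by omega)]
      field_simp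
      ring

section Field

variable {F : Type*} [Field F] [Algebra (ZMod 2) F]

theorem minpoly_inv_dvd_reverse {x : F} (hx : x ≠ 0) :
    minpoly (ZMod 2) x⁻¹ ∣ (minpoly (ZMod 2) x).reverse := by
  let := invertibleOfNonzero hx
  apply minpoly.dvd
  rw [aeval_def, ← invOf_eq_inv x, eval₂_reverse_eq_zero_iff, ← aeval_def, minpoly.aeval]

theorem natDegree_minpoly_inv_le [Finite F] {x : F} (hx : x ≠ 0) :
    (minpoly (ZMod 2) x⁻¹).natDegree ≤ (minpoly (ZMod 2) x).natDegree :=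
  (natDegree_le_of_dvd (minpoly_inv_dvd_reverse hx)
    (reverse_eq_zero.not.mpr (minpoly.ne_zero (.of_finite _ x)))).trans (reverse_natDegree_le _)

theorem natDegree_minpoly_inv [Finite F] {x : F} (hx : x ≠ 0) :
    (minpoly (ZMod 2) x⁻¹).natDegree = (minpoly (ZMod 2) x).natDegree :=
  (natDegree_minpoly_inv_le hx).antisymm
    (by simpa using natDegree_minpoly_inv_le (inv_ne_zero hx))

theorem minpoly_inv_eq_reverse [Finite F] {x : F} (hx : x ≠ 0) :
    minpoly (ZMod 2) x⁻¹ = (minpoly (ZMod 2) x).reverse := by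
  have h0 : (minpoly (ZMod 2) x).reverse ≠ 0 :=
    reverse_eq_zero.not.mpr (minpoly.ne_zero (.of_finite _ x))
  refine (eq_of_monic_of_dvd_of_natDegree_le (minpoly.monic (.of_finite _ _))
    (monic_of_ne_zero_zmod_two h0) (minpoly_inv_dvd_reverse hx) ?_).symm
  exact (reverse_natDegree_le _).trans (natDegree_minpoly_inv hx).ge

theorem nextCoeff_minpoly_inv [Finite F] {x : F} (hx : x ≠ 0) :
    (minpoly (ZMod 2) x⁻¹).nextCoeff = (minpoly (ZMod 2) x).coeff 1 := by
  rw [← coeff_one_reverse, ← minpoly_inv_eq_reverse (inv_ne_zero hx), inv_inv]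

theorem trace_eq_div_mul_nextCoeff [Finite F] (x : F) :
    Algebra.trace (ZMod 2) F x =
      ((Module.finrank (ZMod 2) F / (minpoly (ZMod 2) x).natDegree : ℕ) : ZMod 2) *
        (minpoly (ZMod 2) x).nextCoeff := by
  have hpos := minpoly.natDegree_pos (Algebra.IsIntegral.isIntegral (R := ZMod 2) x)
  rw [trace_eq_finrank_mul_minpoly_nextCoeff, CharTwo.neg_eq,
    ← Module.finrank_mul_finrank (ZMod 2) (IntermediateField.adjoin (ZMod 2) {x}) F,
    IntermediateField.adjoin.finrank (.of_finite _ x), Nat.mul_div_cancel_left _ hpos]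

theorem binSign_trace_add_trace_inv [Finite F] {x : F} (hx : x ≠ 0) :
    binSign (Algebra.trace (ZMod 2) F x + Algebra.trace (ZMod 2) F x⁻¹) =
      klChar (minpoly (ZMod 2) x) ^
        (Module.finrank (ZMod 2) F / (minpoly (ZMod 2) x).natDegree) := by
  have h0 := minpoly.coeff_zero_ne_zero (Algebra.IsIntegral.isIntegral (R := ZMod 2) x) hx
  rw [trace_eq_div_mul_nextCoeff, trace_eq_div_mul_nextCoeff, natDegree_minpoly_inv hx,
    nextCoeff_minpoly_inv hx, ← mul_add, binSign_natCast_mul, klChar, if_neg h0]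

variable [Fintype F]

open Classical in
theorem card_filter_minpoly_eq {P : (ZMod 2)[X]} (hP : Irreducible P)
    (hdvd : P.natDegree ∣ Module.finrank (ZMod 2) F) :
    (Finset.univ.filter fun x : F => minpoly (ZMod 2) x = P).card = P.natDegree := by
  have hm := monic_of_ne_zero_zmod_two hP.ne_zero
  have hcard : Nat.card (ZMod 2) ^ Module.finrank (ZMod 2) F = Fintype.card F := by
    rw [Nat.card_eq_fintype_card, ← Module.card_eq_pow_finrank]
  have hd := hP.natDegree_dvd_iff_dvd_X_pow_card_pow_sub_X.mp hdvd
  rw [hcard] at hd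
  have hs : (P.map (algebraMap (ZMod 2) F)).Splits :=
    (FiniteField.isSplittingField_sub F (ZMod 2)).splits.of_dvd
      (map_ne_zero (FiniteField.X_pow_card_sub_X_ne_zero _ Fintype.one_lt_card))
      (map_dvd (algebraMap (ZMod 2) F) hd)
  rw [← card_rootSet_eq_natDegree (PerfectField.separable_of_irreducible hP) hs,
    ← Set.toFinset_card]
  congr 1
  ext x
  rw [Finset.mem_filter, Set.mem_toFinset, mem_rootSet_of_ne hP.ne_zero]
  refine ⟨?_, fun h => ⟨Finset.mem_univ x, (minpoly.eq_of_irreducible_of_monic hP h hm).symm⟩⟩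
  rintro ⟨-, rfl⟩
  exact minpoly.aeval _ x

open Classical in
theorem sum_binSign_trace_eq_klSum :
    ∑ x : F, (if x = 0 then 0 else
      binSign (Algebra.trace (ZMod 2) F x + Algebra.trace (ZMod 2) F x⁻¹)) =
      klSum (Module.finrank (ZMod 2) F) := by
  set m := Module.finrank (ZMod 2) F with hm
  have hmpos : 0 < m := Module.finrank_pos
  have hdeg : ∀ x : F, (minpoly (ZMod 2) x).natDegree ∣ m := fun x =>
    minpoly.degree_dvd (.of_finite _ x)
  have hterm : ∀ x : F, (if x = 0 then 0 else
      binSign (Algebra.trace (ZMod 2) F x + Algebra.trace (ZMod 2) F x⁻¹)) =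
      klChar (minpoly (ZMod 2) x) ^ (m / (minpoly (ZMod 2) x).natDegree) := fun x => by
    split_ifs with hx
    · subst hx
      rw [minpoly.zero]
      simp [klChar, hmpos.ne']
    · exact binSign_trace_add_trace_inv hx
  simp_rw [hterm]
  rw [klSum, Finset.sum_sigma', ← Finset.sum_fiberwise_of_maps_to
    (s := Finset.univ) (t := m.divisorsAntidiagonal.sigma fun p => irredsOfDegree p.1)
    (g := fun x : F => ⟨((minpoly (ZMod 2) x).natDegree, m / (minpoly (ZMod 2) x).natDegree),
      minpoly (ZMod 2) x⟩)]
  · refine Finset.sum_congr rfl ?_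
    rintro ⟨⟨e, k⟩, P⟩ h
    simp only [Finset.mem_sigma, Nat.mem_divisorsAntidiagonal, mem_irredsOfDegree] at h
    obtain ⟨⟨hek, -⟩, hP, rfl⟩ := h
    have hk : m / P.natDegree = k := by
      rw [← hek, Nat.mul_div_cancel_left _ hP.natDegree_pos]
    have hfilter : (Finset.univ.filter fun x : F =>
        (⟨((minpoly (ZMod 2) x).natDegree, m / (minpoly (ZMod 2) x).natDegree),
          minpoly (ZMod 2) x⟩ : (_ : ℕ × ℕ) × (ZMod 2)[X]) = ⟨(P.natDegree, k), P⟩) =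
        Finset.univ.filter fun x : F => minpoly (ZMod 2) x = P := by
      refine Finset.filter_congr fun x _ => ⟨fun h => ?_, fun h => ?_⟩
      · exact congrArg Sigma.snd h
      · rw [h, hk]
    rw [hfilter, Finset.sum_congr rfl (g := fun _ => klChar P ^ k), Finset.sum_const,
      card_filter_minpoly_eq hP (Dvd.intro k hek), nsmul_eq_mul]
    intro x hx
    rw [(Finset.mem_filter.mp hx).2, hk]
  · intro x _
    simp only [Finset.mem_sigma, Nat.mem_divisorsAntidiagonal, mem_irredsOfDegree]
    exact ⟨⟨Nat.mul_div_cancel' (hdeg x), hmpos.ne'⟩, minpoly.irreducible (.of_finite _ x), trivial⟩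

theorem sum_binSign_trace : ∑ x : F, binSign (Algebra.trace (ZMod 2) F x) = 0 := by
  obtain ⟨a, ha⟩ := Algebra.trace_surjective (ZMod 2) F 1
  have h : ∑ x : F, binSign (Algebra.trace (ZMod 2) F x) =
      ∑ x : F, binSign (Algebra.trace (ZMod 2) F (x + a)) :=
    (Equiv.sum_comp (Equiv.addRight a) fun x => binSign (Algebra.trace (ZMod 2) F x)).symm
  have h1 : binSign 1 = -1 := by decide
  simp_rw [map_add, binSign_add, ha, h1, mul_neg_one, Finset.sum_neg_distrib] at h
  linarith

theorem sum_binSign_trace_inv : ∑ x : F, binSign (Algebra.trace (ZMod 2) F x⁻¹) = 0 :=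
  (Equiv.sum_comp (Equiv.inv F) fun x => binSign (Algebra.trace (ZMod 2) F x)).trans
    sum_binSign_trace

theorem four_mul_card_trace_eq_one :
    (4 : ℤ) * Nat.card {x : F | x ≠ 0 ∧ Algebra.trace (ZMod 2) F x = 1 ∧
        Algebra.trace (ZMod 2) F x⁻¹ = 1} =
      Fintype.card F + 1 + klSum (Module.finrank (ZMod 2) F) := by
  classical
  have hab : ∀ a b : ZMod 2, (4 : ℤ) * (if a = 1 ∧ b = 1 then 1 else 0) =
      1 - binSign a - binSign b + binSign (a + b) := by decide
  have key : ∀ x : F, (4 : ℤ) * (if x ≠ 0 ∧ Algebra.trace (ZMod 2) F x = 1 ∧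
      Algebra.trace (ZMod 2) F x⁻¹ = 1 then 1 else 0) =
      1 - binSign (Algebra.trace (ZMod 2) F x) - binSign (Algebra.trace (ZMod 2) F x⁻¹) +
        (if x = 0 then 0 else
          binSign (Algebra.trace (ZMod 2) F x + Algebra.trace (ZMod 2) F x⁻¹)) +
        (if x = 0 then 1 else 0) := fun x => by
    by_cases hx : x = 0
    · simp [hx, binSign]
    · simp only [hx, ne_eq, not_false_eq_true, true_and, if_false, add_zero, hab]
  rw [Nat.card_eq_fintype_card, Fintype.card_subtype, Finset.card_filter,
    Nat.cast_sum, Finset.mul_sum]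
  simp only [Set.mem_ofPred_eq, Nat.cast_ite, Nat.cast_one, Nat.cast_zero, key]
  rw [Finset.sum_add_distrib, Finset.sum_add_distrib, Finset.sum_sub_distrib,
    Finset.sum_sub_distrib, sum_binSign_trace, sum_binSign_trace_inv, sum_binSign_trace_eq_klSum]
  simp
  ring

end Field

theorem binary_T11 (m : ℕ) (hm : 2 ≤ m) (F : Type*) [Field F] [Fintype F]
    [Algebra (ZMod 2) F] (hq : Fintype.card F = 2 ^ m) :
    (Nat.card {x : F | x ≠ 0 ∧ Algebra.trace (ZMod 2) F x = 1 ∧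
        Algebra.trace (ZMod 2) F x⁻¹ = 1} : ℝ) =
      ((2 : ℝ) ^ m + 1) / 4 + (1 / 2 ^ (m + 1)) *
        ∑ r ∈ Finset.range (m / 2 + 1), (-1 : ℝ) ^ (m + r + 1) * (m.choose (2 * r)) * 7 ^ r := by
  have hfin : Module.finrank (ZMod 2) F = m := by
    have h := Module.card_eq_pow_finrank (K := ZMod 2) (V := F)
    rw [hq, ZMod.card] at h
    exact (Nat.pow_right_injective le_rfl h).symm
  have h := congrArg (Int.cast : ℤ → ℝ) (four_mul_card_trace_eq_one (F := F))
  rw [hfin, hq] at h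
  push_cast at h
  have hsum : ∑ r ∈ Finset.range (m / 2 + 1), (-1 : ℝ) ^ (m + r + 1) * (m.choose (2 * r)) * 7 ^ r =
      (-1) ^ (m + 1) * evenSum m := by
    rw [evenSum, Finset.mul_sum]
    refine Finset.sum_congr rfl fun r _ => ?_
    rw [neg_pow 7 r]
    ring
  rw [klSum_eq (by omega)] at h
  rw [hsum, pow_succ 2 m]
  field_simp at h ⊢
  linarith
end
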